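/- Let X be a metric space with Hilbert space compression δ > 0, fix 0 < p < δ and a, b, r > 0. Then for all sufficiently large n, there exists a Hilbert space H and unit vectors (ξ_n^x)_{x∈X} in H such that: (1) ‖ξ_n^x − ξ_n^y‖ ≤ 1/(a n^b) whenever d(x,y) ≤ n^r; and (2) ‖ξ_n^x − ξ_n^y‖ ≥ 1 whenever d(x,y) ≥ n^{(r+b+p)/(δ−p)}. -/

import Mathlib

/-!
Over the Fock space `⨁ₙ H^{⊗n}` the exponential map satisfies `⟪Exp u, Exp v⟫ = exp ⟪u, v⟫`, so the
normalised vectors `e^{-‖u‖²/2} Exp u` are unit vectors whose mutual distance depends on `‖u - v‖`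
alone: its square is `2 (1 - exp (-‖u - v‖² / 2))`. This is at most `‖u - v‖²`, and at least `1` as
soon as `‖u - v‖ ≥ 2`. Rescaling the embedding `F` by `ε / ρ₊(R)` with `ε = 1 / (a nᵇ)` and `R = nʳ`
makes points at distance at most `R` move by at most `ε`, whereas the lower compression bound is of
order `n^{r+b+p}` at distance `n^{(r+b+p)/(δ-p)}` and hence beats `2 ρ₊(R) / ε ~ n^{r+b}`. In the
notation of the paper the rescaling is `t = ε² / (2 ρ₊(R)²)`, slightly below `t_n` and easier to
handle.
-/

open Filter Asymptotics UniformSpace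
open scoped TensorProduct InnerProductSpace

noncomputable section

universe u

/-- A real Hilbert space bundled with its structure, so that families of Hilbert spaces can be
defined by recursion. -/
structure RealHilbertSpace : Type (u + 1) where
  carrier : Type u
  [normedAddCommGroup : NormedAddCommGroup carrier]
  [innerProductSpace : InnerProductSpace ℝ carrier]
  [completeSpace : CompleteSpace carrier]

namespace RealHilbertSpace

instance : CoeSort RealHilbertSpace.{u} (Type u) := ⟨carrier⟩

attribute [instance] normedAddCommGroup innerProductSpace completeSpace

end RealHilbertSpace

section FockSpace

variable (H : Type u) [NormedAddCommGroup H] [InnerProductSpace ℝ H]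

/-- The Hilbert tensor powers `H^{⊗n}`, each obtained from the previous one by completing its
algebraic tensor product with `H`. The ground field is encoded as `EuclideanSpace ℝ PUnit`, which
unlike `ℝ` lives in the universe of `H`. -/
def hilbertTensorPower : ℕ → RealHilbertSpace.{u}
  | 0 => ⟨EuclideanSpace ℝ PUnit.{u + 1}⟩
  | n + 1 => ⟨Completion (hilbertTensorPower n ⊗[ℝ] H)⟩

/-- The full Fock space `⨁ₙ H^{⊗n}` over `H`, as the Hilbert sum of the tensor powers. -/
abbrev FockSpace : Type u := lp (fun n => hilbertTensorPower H n) 2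

variable {H}

/-- The elementary tensor `x ⊗ ⋯ ⊗ x` with `n` factors. -/
def tensorPow (x : H) : ∀ n, hilbertTensorPower H n
  | 0 => EuclideanSpace.single PUnit.unit (1 : ℝ)
  | n + 1 => ((tensorPow x n ⊗ₜ[ℝ] x : hilbertTensorPower H n ⊗[ℝ] H) : Completion _)

theorem inner_tensorPow (x y : H) (n : ℕ) :
    ⟪tensorPow x n, tensorPow y n⟫_ℝ = ⟪x, y⟫_ℝ ^ n := by
  induction n with
  | zero =>
    change ⟪EuclideanSpace.single PUnit.unit (1 : ℝ), EuclideanSpace.single PUnit.unit 1⟫_ℝ = _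
    simp
  | succ n ih =>
    calc ⟪tensorPow x (n + 1), tensorPow y (n + 1)⟫_ℝ
        = ⟪tensorPow x n ⊗ₜ[ℝ] x, tensorPow y n ⊗ₜ[ℝ] y⟫_ℝ := Completion.inner_coe _ _
      _ = ⟪x, y⟫_ℝ ^ (n + 1) := by rw [TensorProduct.inner_tmul, ih, pow_succ]

namespace FockSpace

/-- The degree `n` component `x^{⊗n} / √n!` of the exponential vector of `x`. -/
def expComponent (x : H) (n : ℕ) : hilbertTensorPower H n :=
  (√(n.factorial : ℝ))⁻¹ • tensorPow x n

theorem inner_expComponent (x y : H) (n : ℕ) :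
    ⟪expComponent x n, expComponent y n⟫_ℝ = ⟪x, y⟫_ℝ ^ n / n.factorial := by
  rw [expComponent, expComponent, real_inner_smul_left, real_inner_smul_right, inner_tensorPow,
    ← mul_assoc, ← mul_inv, Real.mul_self_sqrt (Nat.cast_nonneg _), inv_mul_eq_div]

theorem memℓp_expComponent (x : H) : Memℓp (expComponent x) 2 := by
  refine memℓp_gen ((Real.summable_pow_div_factorial ⟪x, x⟫_ℝ).congr fun n => ?_)
  rw [ENNReal.toReal_ofNat, Real.rpow_ofNat, ← real_inner_self_eq_norm_sq, inner_expComponent]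

/-- The exponential map `Exp x = ∑ₙ x^{⊗n} / √n!` from a Hilbert space to its Fock space. -/
def expVector (x : H) : FockSpace H := ⟨expComponent x, memℓp_expComponent x⟩

theorem inner_expVector (x y : H) : ⟪expVector x, expVector y⟫_ℝ = Real.exp ⟪x, y⟫_ℝ := by
  rw [lp.inner_eq_tsum, Real.exp_eq_exp_ℝ, NormedSpace.exp_eq_tsum_div]
  exact tsum_congr (inner_expComponent x y)

/-- The normalised exponential vector `e^{-‖x‖²/2} Exp x`. The vector `ξ_n^x` of the paper is the
coherent state of `√(2 t_n) F(x)`. -/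
def coherentState (x : H) : FockSpace H := Real.exp (-(‖x‖ ^ 2 / 2)) • expVector x

theorem inner_coherentState (x y : H) :
    ⟪coherentState x, coherentState y⟫_ℝ = Real.exp (-(‖x - y‖ ^ 2 / 2)) := by
  rw [coherentState, coherentState, real_inner_smul_left, real_inner_smul_right, inner_expVector,
    ← Real.exp_add, ← Real.exp_add, norm_sub_sq_real]
  ring_nf

theorem norm_coherentState (x : H) : ‖coherentState x‖ = 1 := by
  rw [norm_eq_sqrt_real_inner, inner_coherentState]
  simp

theorem norm_coherentState_sub_sq (x y : H) :
    ‖coherentState x - coherentState y‖ ^ 2 = 2 * (1 - Real.exp (-(‖x - y‖ ^ 2 / 2))) := by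
  rw [norm_sub_sq_real, norm_coherentState, norm_coherentState, inner_coherentState]
  ring

theorem norm_coherentState_sub_le (x y : H) :
    ‖coherentState x - coherentState y‖ ≤ ‖x - y‖ := by
  refine le_of_sq_le_sq ?_ (norm_nonneg _)
  linarith [norm_coherentState_sub_sq x y, Real.one_sub_le_exp_neg (‖x - y‖ ^ 2 / 2)]

theorem one_le_norm_coherentState_sub_iff {x y : H} :
    1 ≤ ‖coherentState x - coherentState y‖ ↔ 2 * Real.log 2 ≤ ‖x - y‖ ^ 2 := by
  calc 1 ≤ ‖coherentState x - coherentState y‖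
      ↔ 1 ≤ 2 * (1 - Real.exp (-(‖x - y‖ ^ 2 / 2))) := by
        rw [← norm_coherentState_sub_sq, one_le_sq_iff₀ (norm_nonneg _)]
    _ ↔ Real.exp (-(‖x - y‖ ^ 2 / 2)) ≤ 2⁻¹ := by constructor <;> intro h <;> linarith
    _ ↔ -(‖x - y‖ ^ 2 / 2) ≤ -Real.log 2 := by
        rw [← Real.log_inv, Real.le_log_iff_exp_le (by norm_num)]
    _ ↔ 2 * Real.log 2 ≤ ‖x - y‖ ^ 2 := by constructor <;> intro h <;> linarith

theorem one_le_norm_coherentState_sub {x y : H} (h : 2 ≤ ‖x - y‖) :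
    1 ≤ ‖coherentState x - coherentState y‖ := by
  rw [one_le_norm_coherentState_sub_iff]
  nlinarith [Real.log_two_lt_d9]

theorem norm_coherentState_smul_sub_le {ε ρ : ℝ} (hε : 0 ≤ ε) (hρ : 0 < ρ) {x y : H}
    (h : ‖x - y‖ ≤ ρ) :
    ‖coherentState ((ε / ρ) • x) - coherentState ((ε / ρ) • y)‖ ≤ ε :=
  calc ‖coherentState ((ε / ρ) • x) - coherentState ((ε / ρ) • y)‖
      ≤ ‖(ε / ρ) • x - (ε / ρ) • y‖ := norm_coherentState_sub_le _ _
    _ = ε / ρ * ‖x - y‖ := by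
        rw [← smul_sub, norm_smul, Real.norm_of_nonneg (div_nonneg hε hρ.le)]
    _ ≤ ε / ρ * ρ := by gcongr
    _ = ε := div_mul_cancel₀ ε hρ.ne'

theorem one_le_norm_coherentState_smul_sub {ε ρ : ℝ} (hε : 0 < ε) (hρ : 0 < ρ) {x y : H}
    (h : 2 * (ρ / ε) ≤ ‖x - y‖) :
    1 ≤ ‖coherentState ((ε / ρ) • x) - coherentState ((ε / ρ) • y)‖ := by
  apply one_le_norm_coherentState_sub
  calc (2 : ℝ) = ε / ρ * (2 * (ρ / ε)) := by field_simp
    _ ≤ ε / ρ * ‖x - y‖ := by gcongr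
    _ = ‖(ε / ρ) • x - (ε / ρ) • y‖ := by
        rw [← smul_sub, norm_smul, Real.norm_of_nonneg (div_pos hε hρ).le]

end FockSpace

end FockSpace

section Asymptotics

theorem isLittleO_rpow_rpow_atTop_of_lt {u v : ℝ} (h : u < v) :
    (fun s : ℝ => s ^ u) =o[atTop] fun s => s ^ v := by
  have hdiv : (fun s : ℝ => s ^ (-(v - u))) =ᶠ[atTop] fun s => s ^ u / s ^ v := by
    filter_upwards [eventually_gt_atTop 0] with s hs
    rw [← Real.rpow_sub hs, neg_sub]
  refine isLittleO_of_tendsto' ?_ ((tendsto_rpow_neg_atTop (sub_pos.2 h)).congr' hdiv)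
  filter_upwards [eventually_gt_atTop 0] with s hs h0
  exact absurd h0 (Real.rpow_pos_of_pos hs v).ne'

theorem isLittleO_rpow_mul_affine_rpow_atTop {p b r : ℝ} (hp : 0 < p) (hb : 0 ≤ b) (hr : 0 ≤ r)
    (A B D : ℝ) :
    (fun s : ℝ => s ^ b * (A * s ^ r + B) + D) =o[atTop] fun s => s ^ (r + b + p) := by
  have rpow_littleO {e : ℝ} (he : e < r + b + p) (c : ℝ) :
      (fun s : ℝ => c * s ^ e) =o[atTop] fun s => s ^ (r + b + p) :=
    (isLittleO_rpow_rpow_atTop_of_lt he).const_mul_left c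
  have hlead := rpow_littleO (show r + b < r + b + p by linarith) A
  have hmid := rpow_littleO (show b < r + b + p by linarith) B
  have hconst := rpow_littleO (show 0 < r + b + p by linarith) D
  refine ((hlead.add hmid).add hconst).congr' ?_ EventuallyEq.rfl
  filter_upwards [eventually_gt_atTop 0] with s hs
  rw [Real.rpow_add hs, Real.rpow_zero]
  ring

theorem eventually_rpow_mul_affine_rpow_le {p b r c : ℝ} (hp : 0 < p) (hb : 0 ≤ b) (hr : 0 ≤ r)
    (hc : 0 < c) (A B D : ℝ) :
    ∀ᶠ s : ℝ in atTop, s ^ b * (A * s ^ r + B) + D ≤ c * s ^ (r + b + p) := by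
  filter_upwards [(isLittleO_rpow_mul_affine_rpow_atTop hp hb hr A B D).bound hc,
    eventually_ge_atTop 0] with s hbound hs
  rw [Real.norm_of_nonneg (Real.rpow_nonneg hs _)] at hbound
  exact (Real.le_norm_self _).trans hbound

end Asymptotics

theorem compression_explicit_unit_vectors_general
    {X : Type*} [PseudoMetricSpace X] {H : Type u} [NormedAddCommGroup H] [InnerProductSpace ℝ H]
    {F : X → H} {α C Ctil D Dtil : ℝ} (hα : 0 < α) (hC : 0 < C) (hCtil : 0 < Ctil)
    (hDtil : 0 ≤ Dtil) (hlower : ∀ x y, 1 / C * dist x y ^ α - D ≤ ‖F x - F y‖)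
    (hupper : ∀ x y, ‖F x - F y‖ ≤ Ctil * dist x y + Dtil)
    {p a b r : ℝ} (hp : 0 < p) (ha : 0 < a) (hb : 0 ≤ b) (hr : 0 ≤ r) :
    ∃ (K : Type u) (_ : NormedAddCommGroup K) (_ : InnerProductSpace ℝ K) (_ : CompleteSpace K),
      ∀ᶠ s : ℝ in atTop, ∃ ξ : X → K,
        (∀ x, ‖ξ x‖ = 1) ∧
        (∀ x y, dist x y ≤ s ^ r → ‖ξ x - ξ y‖ ≤ 1 / (a * s ^ b)) ∧
        (∀ x y, s ^ ((r + b + p) / α) ≤ dist x y → 1 ≤ ‖ξ x - ξ y‖) := by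
  refine ⟨FockSpace H, inferInstance, inferInstance, inferInstance, ?_⟩
  filter_upwards [eventually_gt_atTop 0, eventually_rpow_mul_affine_rpow_le hp hb hr
    (one_div_pos.2 hC) (2 * a * Ctil) (2 * a * Dtil) D] with s hs hgrowth
  have hρ : 0 < Ctil * s ^ r + Dtil := by positivity
  have hε : 0 < 1 / (a * s ^ b) := by positivity
  refine ⟨fun x => FockSpace.coherentState ((1 / (a * s ^ b) / (Ctil * s ^ r + Dtil)) • F x),
    fun x => FockSpace.norm_coherentState _, fun x y hxy => ?_, fun x y hxy => ?_⟩
  · exact FockSpace.norm_coherentState_smul_sub_le hε.le hρ ((hupper x y).trans (by gcongr))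
  · have hdist : s ^ (r + b + p) ≤ dist x y ^ α :=
      (Real.rpow_inv_le_iff_of_pos (by positivity) dist_nonneg hα).1 <| by
        rwa [← Real.rpow_mul hs.le, ← div_eq_mul_inv]
    refine FockSpace.one_le_norm_coherentState_smul_sub hε hρ ?_
    calc 2 * ((Ctil * s ^ r + Dtil) / (1 / (a * s ^ b)))
        = s ^ b * (2 * a * Ctil * s ^ r + 2 * a * Dtil) := by
          rw [div_div_eq_mul_div, div_one]
          ring
      _ ≤ 1 / C * s ^ (r + b + p) - D := le_sub_iff_add_le.2 hgrowth
      _ ≤ 1 / C * dist x y ^ α - D := by gcongr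
      _ ≤ ‖F x - F y‖ := hlower x y

end

/-- Let `X` be a metric space with Hilbert space compression `δ > 0`, i.e. for
every `0 < q < δ` there is a large-scale Lipschitz embedding with lower bound
of exponent `δ − q`. Fix `0 < p < δ` and `a, b, r > 0`. Then for all
sufficiently large `n` there are a Hilbert space and unit vectors
`(ξ_n^x)_{x∈X}` with `‖ξ_n^x − ξ_n^y‖ ≤ 1/(a n^b)` when `d(x,y) ≤ n^r` and
`‖ξ_n^x − ξ_n^y‖ ≥ 1` when `d(x,y) ≥ n^{(r+b+p)/(δ−p)}`. -/
theorem compression_explicit_unit_vectors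
    {X : Type*} [MetricSpace X] (δ : ℝ) (hδ : 0 < δ)
    (hcomp : ∀ q : ℝ, 0 < q → q < δ →
      ∃ (H : Type) (_ : NormedAddCommGroup H) (_ : InnerProductSpace ℝ H)
        (F : X → H) (C Ctil D Dtil : ℝ), 0 < C ∧ 0 < Ctil ∧ 0 ≤ D ∧ 0 ≤ Dtil ∧
        ∀ x y : X,
          (1 / C) * dist x y ^ (δ - q) - D ≤ ‖F x - F y‖ ∧
          ‖F x - F y‖ ≤ Ctil * dist x y + Dtil)
    (p a b r : ℝ) (hp0 : 0 < p) (hpδ : p < δ) (ha : 0 < a) (hb : 0 < b) (hr : 0 < r) :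
    ∃ N : ℕ, ∀ n : ℕ, N ≤ n →
      ∃ (H : Type) (_ : NormedAddCommGroup H) (_ : InnerProductSpace ℝ H)
        (ξ : X → H),
        (∀ x : X, ‖ξ x‖ = 1) ∧
        (∀ x y : X, dist x y ≤ (n : ℝ) ^ r → ‖ξ x - ξ y‖ ≤ 1 / (a * (n : ℝ) ^ b)) ∧
        (∀ x y : X, (n : ℝ) ^ ((r + b + p) / (δ - p)) ≤ dist x y → 1 ≤ ‖ξ x - ξ y‖) := by
  obtain ⟨H, _, _, F, C, Ctil, D, Dtil, hC, hCtil, -, hDtil, hF⟩ := hcomp p hp0 hpδ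
  obtain ⟨K, _, _, _, hK⟩ := compression_explicit_unit_vectors_general (sub_pos.2 hpδ) hC hCtil
    hDtil (fun x y => (hF x y).1) (fun x y => (hF x y).2) hp0 ha hb.le hr.le
  obtain ⟨N, hN⟩ := eventually_atTop.1 (tendsto_natCast_atTop_atTop.eventually hK)
  exact ⟨N, fun n hn => ⟨K, inferInstance, inferInstance, hN n hn⟩⟩
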